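/- arXiv:dg-ga/9607005 — 2 statements merged into one kernel-verified Lean document; each statement's English description precedes it below -/
import Mathlib

section
/- Let γ ∈ ℝ, R > 0, and let f : (0,∞) → ℂ be measurable with f(x) = 0 for x > R and E := ∫₀^R |f(x)|² x^{−2γ} dx < ∞. Then the Mellin transform Mf(z) = ∫₀^R x^{z−1} f(x) dx converges absolutely for every z with Re z > 1/2 − γ, the function z ↦ Mf(z) is holomorphic on the half-plane {z ∈ ℂ : Re z > 1/2 − γ}, and for every a > 1/2 − γ one has ∫_ℝ |Mf(a + iτ)|² dτ ≤ 2π R^{2(γ + a − 1/2)} E. -/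
/-!
The substitution `x = exp (-u)` turns `τ ↦ mellin f (a + iτ)` into the Fourier transform, at
frequency `τ / (2π)`, of `g u = exp (-a u) f (exp (-u))`, and turns `∫ |g|²` into
`∫ |f x|² x ^ (2a - 1)` over `(0, ∞)`. Plancherel then gives the identity
`∫ |mellin f (a + iτ)|² dτ = 2π ∫ |f x|² x ^ (2a - 1) dx` (`integral_norm_sq_mellin`). Since `f`
lives on `(0, R]` and `2a - 1 = 2 (γ + a - 1/2) - 2γ` with `γ + a - 1/2 > 0`, the weight
`x ^ (2a - 1)` is at most `R ^ (2 (γ + a - 1/2)) x ^ (-2γ)` there, which is the stated bound.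

Absolute convergence (`integrableOn_rpow_mul_norm`) is the Cauchy-Schwarz argument in its pointwise
form: `x ^ (s - 1) |f x| ≤ x ^ (2 (s - 1 + γ)) + |f x|² x ^ (-2γ)` on `(0, R]`, the first power being
integrable at `0` exactly when `s > 1/2 - γ`. Holomorphy (`differentiableAt_mellin`) is
differentiation under the integral sign; the extra `log x` costs an arbitrarily small power of `x`.

Mathlib states Plancherel for the Fourier transform on `Lp ℂ 2`, defined by extension from Schwartz
functions. `integral_norm_sq_fourier` transfers it to the Fourier integral of a function in
`L¹ ∩ L²`, by showing that the two transforms define the same distribution.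
-/

open MeasureTheory

open scoped FourierTransform SchwartzMap ContDiff ENNReal Topology

lemma norm_sq_eq_integral (G : Lp ℂ 2 (volume : Measure ℝ)) :
    ‖G‖ ^ 2 = ∫ x, ‖G x‖ ^ 2 := by
  have h : inner ℂ G G = ((∫ x, ‖G x‖ ^ 2 : ℝ) : ℂ) := by
    rw [L2.inner_def, ← integral_complex_ofReal]
    congr 1
    ext x
    rw [inner_self_eq_norm_sq_to_K]
    simp
  rw [inner_self_eq_norm_sq_to_K] at h
  exact Complex.ofReal_injective (by simpa using h)

/-- Plancherel's theorem for the Fourier integral of a function in `L¹ ∩ L²`. -/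
lemma integral_norm_sq_fourier {g : ℝ → ℂ} (h1 : Integrable g) (h2 : MemLp g 2) :
    ∫ t, ‖𝓕 g t‖ ^ 2 = ∫ u, ‖g u‖ ^ 2 := by
  set G : Lp ℂ 2 (volume : Measure ℝ) := h2.toLp g with hG
  have hGg : G =ᵐ[volume] g := h2.coeFn_toLp
  have hcont : Continuous (𝓕 g) :=
    VectorFourier.fourierIntegral_continuous Real.continuous_fourierChar
      (by exact continuous_inner) h1
  -- Both sides have the same pairing with every test function `φ`, namely `∫ 𝓕 φ · g`.
  have key : ∀ᵐ t, (𝓕 G : Lp ℂ 2 (volume : Measure ℝ)) t = 𝓕 g t := by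
    refine ae_eq_of_integral_contDiff_smul_eq
      ((Lp.memLp (𝓕 G)).locallyIntegrable (by norm_num)) hcont.locallyIntegrable ?_
    intro φ hφ hφc
    have hc : HasCompactSupport (fun x => (φ x : ℂ)) :=
      hφc.comp_left (g := ((↑) : ℝ → ℂ)) (by simp)
    let ψ : 𝓢(ℝ, ℂ) := hc.toSchwartzMap (Complex.ofRealCLM.contDiff.comp hφ)
    have hψ : ∀ x, ψ x = (φ x : ℂ) := fun x => rfl
    have e := congrArg (fun T => T ψ) (Lp.fourier_toTemperedDistribution_eq G)
    simp only [TemperedDistribution.fourier_apply, Lp.toTemperedDistribution_apply] at e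
    have e2 : ∫ x, (𝓕 ψ) x • G x = ∫ x, (𝓕 ψ) x • g x :=
      integral_congr_ae (by filter_upwards [hGg] with x hx; rw [hx])
    have e3 : ∫ x, (𝓕 ψ) x • g x = ∫ x, ψ x • 𝓕 g x := by
      rw [SchwartzMap.fourier_coe]
      have := VectorFourier.integral_fourierIntegral_smul_eq_flip (L := innerₗ ℝ)
        (μ := volume) (ν := volume) Real.continuous_fourierChar continuous_inner
        ψ.integrable h1
      rwa [flip_innerₗ] at this
    rw [e2, e3] at e
    simpa [hψ] using e.symm
  calc ∫ t, ‖𝓕 g t‖ ^ 2 = ∫ t, ‖(𝓕 G : Lp ℂ 2 (volume : Measure ℝ)) t‖ ^ 2 :=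
        integral_congr_ae (by filter_upwards [key] with x hx; rw [hx])
    _ = ‖G‖ ^ 2 := by rw [← norm_sq_eq_integral, Lp.norm_fourier_eq]
    _ = ∫ u, ‖g u‖ ^ 2 := by
        rw [norm_sq_eq_integral]
        exact integral_congr_ae (by filter_upwards [hGg] with x hx; rw [hx])

lemma exp_neg_image : (fun u : ℝ => Real.exp (-u)) '' Set.univ = Set.Ioi 0 := by
  rw [Set.image_univ]
  ext y
  constructor
  · rintro ⟨u, rfl⟩
    exact Real.exp_pos _
  · intro hy
    exact ⟨-Real.log y, by simpa using Real.exp_log hy⟩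

lemma exp_neg_deriv (u : ℝ) (_ : u ∈ Set.univ) :
    HasDerivWithinAt (fun u : ℝ => Real.exp (-u)) (-Real.exp (-u)) Set.univ u := by
  have h := (hasDerivAt_neg u).exp
  rw [mul_neg_one] at h
  exact h.hasDerivWithinAt

lemma exp_neg_injOn : Set.univ.InjOn (fun u : ℝ => Real.exp (-u)) :=
  fun _ _ _ _ h => neg_injective (Real.exp_injective h)

lemma integral_Ioi_eq_exp_neg {E : Type*} [NormedAddCommGroup E] [NormedSpace ℝ E] (φ : ℝ → E) :
    ∫ x in Set.Ioi (0 : ℝ), φ x = ∫ u : ℝ, Real.exp (-u) • φ (Real.exp (-u)) := by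
  rw [← exp_neg_image, integral_image_eq_integral_abs_deriv_smul MeasurableSet.univ
    exp_neg_deriv exp_neg_injOn]
  simp

lemma integrableOn_Ioi_iff_exp_neg {E : Type*} [NormedAddCommGroup E] [NormedSpace ℝ E]
    (φ : ℝ → E) :
    IntegrableOn φ (Set.Ioi 0) ↔ Integrable fun u : ℝ => Real.exp (-u) • φ (Real.exp (-u)) := by
  rw [← exp_neg_image, integrableOn_image_iff_integrableOn_abs_deriv_smul MeasurableSet.univ
    exp_neg_deriv exp_neg_injOn]
  simp

section
variable {γ R : ℝ} {f : ℝ → ℂ}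

lemma integrableOn_rpow_mul_norm (hR : 0 < R) (hmeas : Measurable f)
    (hvanish : ∀ x : ℝ, R < x → f x = 0)
    (hInt : IntegrableOn (fun x : ℝ => ‖f x‖ ^ 2 * x ^ (-2 * γ)) (Set.Ioi 0))
    {s : ℝ} (hs : 1 / 2 - γ < s) :
    IntegrableOn (fun x : ℝ => x ^ (s - 1) * ‖f x‖) (Set.Ioi 0) := by
  have hpow : IntegrableOn (fun x : ℝ => x ^ (2 * (s - 1 + γ))) (Set.Ioc 0 R) :=
    (intervalIntegrable_iff_integrableOn_Ioc_of_le hR.le).1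
      (intervalIntegral.intervalIntegrable_rpow' (by linarith))
  have hind : IntegrableOn ((Set.Ioc 0 R).indicator fun x : ℝ => x ^ (2 * (s - 1 + γ)))
      (Set.Ioi 0) :=
    ((integrable_indicator_iff measurableSet_Ioc).2 hpow).integrableOn
  refine (hind.add hInt).mono' (by fun_prop) ?_
  refine (ae_restrict_mem measurableSet_Ioi).mono fun x (hx : 0 < x) => ?_
  have hx0 := Real.rpow_nonneg hx.le
  rw [Real.norm_of_nonneg (mul_nonneg (hx0 _) (norm_nonneg _))]
  simp only [Pi.add_apply]
  by_cases hxR : x ≤ R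
  · rw [Set.indicator_of_mem (Set.mem_Ioc.2 ⟨hx, hxR⟩)]
    have e1 : x ^ (2 * (s - 1 + γ)) = (x ^ (s - 1 + γ)) ^ 2 := by
      rw [← Real.rpow_natCast, ← Real.rpow_mul hx.le]; push_cast; ring_nf
    have e2 : x ^ (-2 * γ) = (x ^ (-γ)) ^ 2 := by
      rw [← Real.rpow_natCast, ← Real.rpow_mul hx.le]; push_cast; ring_nf
    have e3 : x ^ (s - 1) = x ^ (s - 1 + γ) * x ^ (-γ) := by
      rw [← Real.rpow_add hx]; ring_nf
    rw [e1, e2, e3]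
    -- `p q ≤ p² + q²` with `p = x ^ (s - 1 + γ)` and `q = |f x| x ^ (-γ)`.
    nlinarith [sq_nonneg (x ^ (s - 1 + γ) - ‖f x‖ * x ^ (-γ)), sq_nonneg (x ^ (s - 1 + γ)),
      sq_nonneg (‖f x‖ * x ^ (-γ))]
  · rw [hvanish x (not_le.1 hxR), Set.indicator_of_notMem (fun h => hxR h.2)]
    simp

lemma integrableOn_mellin (hR : 0 < R) (hmeas : Measurable f)
    (hvanish : ∀ x : ℝ, R < x → f x = 0)
    (hInt : IntegrableOn (fun x : ℝ => ‖f x‖ ^ 2 * x ^ (-2 * γ)) (Set.Ioi 0))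
    {z : ℂ} (hz : 1 / 2 - γ < z.re) :
    IntegrableOn (fun x : ℝ => (x : ℂ) ^ (z - 1) * f x) (Set.Ioi 0) := by
  refine (integrableOn_rpow_mul_norm hR hmeas hvanish hInt hz).mono' (by fun_prop) ?_
  refine (ae_restrict_mem measurableSet_Ioi).mono fun x (hx : 0 < x) => ?_
  rw [norm_mul, Complex.norm_cpow_eq_rpow_re_of_pos hx]
  simp

/-- The logarithm is dominated by arbitrarily small positive and negative powers. -/
lemma abs_log_le {x ε : ℝ} (hx : 0 < x) (hε : 0 < ε) :
    |Real.log x| ≤ (x ^ ε + x ^ (-ε)) / ε := by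
  have h1 := Real.log_le_rpow_div hx.le hε
  have h2 := Real.log_le_rpow_div (inv_pos.2 hx).le hε
  rw [Real.log_inv, Real.inv_rpow hx.le, ← Real.rpow_neg hx.le] at h2
  have h3 : 0 < x ^ ε / ε := by positivity
  have h4 : 0 < x ^ (-ε) / ε := by positivity
  rw [add_div, abs_le]
  constructor <;> linarith

lemma differentiableAt_mellin (hR : 0 < R) (hmeas : Measurable f)
    (hvanish : ∀ x : ℝ, R < x → f x = 0)
    (hInt : IntegrableOn (fun x : ℝ => ‖f x‖ ^ 2 * x ^ (-2 * γ)) (Set.Ioi 0))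
    {s : ℂ} (hs : 1 / 2 - γ < s.re) : DifferentiableAt ℂ (mellin f) s := by
  -- On the ball of radius `v` the exponent moves by at most `v`, and the logarithm costs another
  -- `v`; the two together must stay inside the half-plane.
  obtain ⟨v, hv0, hv1⟩ : ∃ v : ℝ, 0 < v ∧ 1 / 2 - γ < s.re - v - v :=
    ⟨(s.re - (1 / 2 - γ)) / 3, by linarith, by linarith⟩
  let F : ℂ → ℝ → ℂ := fun z t => (t : ℂ) ^ (z - 1) • f t
  let F' : ℂ → ℝ → ℂ := fun z t => ((t : ℂ) ^ (z - 1) * Real.log t) • f t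
  let bound : ℝ → ℝ := fun t =>
    ((t ^ (s.re + v + v - 1) * ‖f t‖ + t ^ (s.re + v - v - 1) * ‖f t‖) +
      (t ^ (s.re - v + v - 1) * ‖f t‖ + t ^ (s.re - v - v - 1) * ‖f t‖)) / v
  have hI := fun {j : ℝ} (hj : 1 / 2 - γ < j) =>
    integrableOn_rpow_mul_norm hR hmeas hvanish hInt hj
  have hb : IntegrableOn bound (Set.Ioi 0) :=
    ((((hI (by linarith)).add (hI (by linarith))).add
      ((hI (by linarith)).add (hI (by linarith)))).div_const v)
  refine (hasDerivAt_integral_of_dominated_loc_of_deriv_le (F := F) (F' := F') (bound := bound)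
    (μ := volume.restrict (Set.Ioi 0)) (Metric.ball_mem_nhds s hv0) ?_ ?_ ?_ ?_ hb ?_
    ).2.differentiableAt
  · exact Filter.Eventually.of_forall fun z => by fun_prop
  · exact integrableOn_mellin hR hmeas hvanish hInt hs
  · fun_prop
  · refine (ae_restrict_mem measurableSet_Ioi).mono fun t (ht : 0 < t) z hz => ?_
    have hz' : |z.re - s.re| < v := by
      rw [mem_ball_iff_norm] at hz
      simpa using (Complex.abs_re_le_norm (z - s)).trans_lt hz
    rw [abs_lt] at hz'
    have hA : t ^ (z.re - 1) ≤ t ^ (s.re + v - 1) + t ^ (s.re - v - 1) := by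
      rcases le_or_gt 1 t with h | h
      · exact le_add_of_le_of_nonneg (Real.rpow_le_rpow_of_exponent_le h (by linarith))
          (by positivity)
      · exact le_add_of_nonneg_of_le (by positivity)
          (Real.rpow_le_rpow_of_exponent_ge ht h.le (by linarith))
    have hL := abs_log_le ht hv0
    calc ‖F' z t‖ = t ^ (z.re - 1) * |Real.log t| * ‖f t‖ := by
          simp [F', Complex.norm_cpow_eq_rpow_re_of_pos ht]
      _ ≤ (t ^ (s.re + v - 1) + t ^ (s.re - v - 1)) * ((t ^ v + t ^ (-v)) / v) * ‖f t‖ := by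
          gcongr
      _ = bound t := by
          have e : ∀ p q : ℝ, t ^ (p + q - 1) = t ^ (p - 1) * t ^ q := fun p q => by
            rw [← Real.rpow_add ht]; ring_nf
          simp only [bound]
          rw [e (s.re + v) v, e (s.re - v) v, sub_eq_add_neg (s.re + v) v,
            sub_eq_add_neg (s.re - v) v, e (s.re + v) (-v), e (s.re - v) (-v)]
          ring
  · refine (ae_restrict_mem measurableSet_Ioi).mono fun t (ht : 0 < t) y _ => ?_
    have ht' : (t : ℂ) ≠ 0 := Complex.ofReal_ne_zero.mpr ht.ne'
    have u1 : HasDerivAt (fun z : ℂ => (t : ℂ) ^ (z - 1)) (t ^ (y - 1) * Real.log t) y := by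
      convert! ((hasDerivAt_id' y).sub_const 1).const_cpow (Or.inl ht') using 1
      rw [Complex.ofReal_log ht.le]
      ring
    exact u1.smul_const (f t)

lemma norm_sq_mul_rpow_le (hvanish : ∀ x : ℝ, R < x → f x = 0) {a : ℝ} (ha : 1 / 2 - γ < a)
    {x : ℝ} (hx : 0 < x) :
    ‖f x‖ ^ 2 * x ^ (2 * a - 1) ≤
      R ^ (2 * (γ + a - 1 / 2)) * (‖f x‖ ^ 2 * x ^ (-2 * γ)) := by
  by_cases hxR : x ≤ R
  · have e : x ^ (2 * a - 1) = x ^ (2 * (γ + a - 1 / 2)) * x ^ (-2 * γ) := by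
      rw [← Real.rpow_add hx]; ring_nf
    have h : x ^ (2 * (γ + a - 1 / 2)) ≤ R ^ (2 * (γ + a - 1 / 2)) :=
      Real.rpow_le_rpow hx.le hxR (by linarith)
    calc _ = x ^ (2 * (γ + a - 1 / 2)) * (‖f x‖ ^ 2 * x ^ (-2 * γ)) := by rw [e]; ring
      _ ≤ _ := by gcongr
  · simp [hvanish x (not_le.1 hxR)]

lemma integrableOn_norm_sq_mul_rpow (hmeas : Measurable f)
    (hvanish : ∀ x : ℝ, R < x → f x = 0)
    (hInt : IntegrableOn (fun x : ℝ => ‖f x‖ ^ 2 * x ^ (-2 * γ)) (Set.Ioi 0))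
    {a : ℝ} (ha : 1 / 2 - γ < a) :
    IntegrableOn (fun x : ℝ => ‖f x‖ ^ 2 * x ^ (2 * a - 1)) (Set.Ioi 0) := by
  refine (hInt.const_mul (R ^ (2 * (γ + a - 1 / 2)))).mono' (by fun_prop) ?_
  refine (ae_restrict_mem measurableSet_Ioi).mono fun x (hx : 0 < x) => ?_
  rw [Real.norm_of_nonneg (by positivity)]
  exact norm_sq_mul_rpow_le hvanish ha hx

/-- Plancherel's theorem for the Mellin transform on the vertical line `Re z = a`. -/
lemma integral_norm_sq_mellin (hR : 0 < R) (hmeas : Measurable f)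
    (hvanish : ∀ x : ℝ, R < x → f x = 0)
    (hInt : IntegrableOn (fun x : ℝ => ‖f x‖ ^ 2 * x ^ (-2 * γ)) (Set.Ioi 0))
    {a : ℝ} (ha : 1 / 2 - γ < a) :
    ∫ τ : ℝ, ‖mellin f ((a : ℂ) + (τ : ℂ) * Complex.I)‖ ^ 2 =
      2 * Real.pi * ∫ x in Set.Ioi (0 : ℝ), ‖f x‖ ^ 2 * x ^ (2 * a - 1) := by
  set g : ℝ → ℂ := fun u => Real.exp (-a * u) • f (Real.exp (-u)) with hg
  have hgm : Measurable g := by fun_prop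
  have hgn : ∀ u, ‖g u‖ =
      Real.exp (-u) • (Real.exp (-u) ^ (a - 1) * ‖f (Real.exp (-u))‖) := fun u => by
    rw [hg, norm_smul, Real.norm_of_nonneg (Real.exp_pos _).le, smul_eq_mul, ← mul_assoc,
      ← Real.exp_mul, ← Real.exp_add]
    ring_nf
  have hgn2 : ∀ u, ‖g u‖ ^ 2 =
      Real.exp (-u) • (‖f (Real.exp (-u))‖ ^ 2 * Real.exp (-u) ^ (2 * a - 1)) := fun u => by
    rw [hg, norm_smul, Real.norm_of_nonneg (Real.exp_pos _).le, smul_eq_mul, mul_pow,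
      ← Real.exp_nat_mul, ← Real.exp_mul, mul_left_comm (Real.exp (-u)), ← Real.exp_add, mul_comm]
    push_cast
    ring_nf
  have h1 : Integrable g := by
    have := (integrableOn_Ioi_iff_exp_neg _).1
      (integrableOn_rpow_mul_norm hR hmeas hvanish hInt ha)
    simp only [← hgn] at this
    exact (integrable_norm_iff hgm.aestronglyMeasurable).1 this
  have h2 : MemLp g 2 := by
    have := (integrableOn_Ioi_iff_exp_neg _).1
      (integrableOn_norm_sq_mul_rpow hmeas hvanish hInt ha)
    simp only [← hgn2] at this
    exact (memLp_two_iff_integrable_sq_norm hgm.aestronglyMeasurable).2 this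
  have hm : ∀ τ : ℝ, mellin f ((a : ℂ) + (τ : ℂ) * Complex.I) = 𝓕 g (τ / (2 * Real.pi)) :=
    fun τ => by rw [mellin_eq_fourier]; simp [hg]
  simp only [hm]
  rw [Measure.integral_comp_div (fun t => ‖𝓕 g t‖ ^ 2), integral_norm_sq_fourier h1 h2,
    integral_Ioi_eq_exp_neg, abs_of_pos Real.two_pi_pos, smul_eq_mul]
  simp only [← hgn2]

end
/-- Lemma S118 (one direction, after Remling–Schulze): if `f` vanishes for `x > R` and
`∫₀^R |f(x)|² x^{-2γ} dx < ∞`, then its Mellin transform converges absolutely for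
`Re z > 1/2 - γ`, is holomorphic on that half-plane, and satisfies
`‖Mf‖²_{L²(Γ_a)} ≤ 2π R^{2(γ+a-1/2)} ∫₀^R |f|² x^{-2γ} dx` for every `a > 1/2 - γ`. -/
theorem stmt6 (γ R : ℝ) (hR : 0 < R) (f : ℝ → ℂ) (hmeas : Measurable f)
    (hvanish : ∀ x : ℝ, R < x → f x = 0)
    (hInt : IntegrableOn (fun x : ℝ => ‖f x‖ ^ 2 * x ^ (-2 * γ)) (Set.Ioi 0)) :
    (∀ z : ℂ, 1 / 2 - γ < z.re →
        IntegrableOn (fun x : ℝ => (x : ℂ) ^ (z - 1) * f x) (Set.Ioi 0)) ∧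
    DifferentiableOn ℂ (mellin f) {z : ℂ | 1 / 2 - γ < z.re} ∧
    ∀ a : ℝ, 1 / 2 - γ < a →
      (∫ τ : ℝ, ‖mellin f ((a : ℂ) + (τ : ℂ) * Complex.I)‖ ^ 2)
        ≤ 2 * Real.pi * R ^ (2 * (γ + a - 1 / 2)) *
          ∫ x in Set.Ioi (0 : ℝ), ‖f x‖ ^ 2 * x ^ (-2 * γ) := by
  refine ⟨fun z hz => integrableOn_mellin hR hmeas hvanish hInt hz, fun z hz =>
    (differentiableAt_mellin hR hmeas hvanish hInt hz).differentiableWithinAt, fun a ha => ?_⟩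
  rw [integral_norm_sq_mellin hR hmeas hvanish hInt ha, mul_assoc (2 * Real.pi)]
  refine mul_le_mul_of_nonneg_left ?_ Real.two_pi_pos.le
  rw [← integral_const_mul]
  exact setIntegral_mono_on (integrableOn_norm_sq_mul_rpow hmeas hvanish hInt ha)
    (hInt.const_mul _) measurableSet_Ioi fun x hx => norm_sq_mul_rpow_le hvanish ha hx
end

section
/- Let λ ∈ ℝ with λ ≠ 0, and let f : [0,∞) → ℂ be continuously differentiable with both f and f′ square-integrable on (0,∞). Assume either λ < 0, or λ > 0 and f(0) = 0. Then for every x ≥ 0: |f(x)| ≤ (2|λ|)^{−1/2} ( ∫₀^∞ |f′(y) + λ f(y)|² dy )^{1/2}. -/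
open MeasureTheory

/-!
With `g = f' + lam f` and `u = |f|²`, one has `|g|² - 2 lam u' = |f' - lam f|² ≥ 0`, so
`2 lam u' ≤ |g|²` pointwise (`two_mul_inner_le_norm_sq`). For `lam > 0` and `f(0) = 0`, integrating
over `(0, x)` gives `2 lam u(x) ≤ ∫ |g|²`. For `lam < 0`, integrating over `(x, ∞)`, where `u` tends
to `0` because `u` and `u'` are integrable, gives `-2 lam u(x) ≤ ∫ |g|²`.
-/

/-- The left-hand side is `2 c` times the derivative of `‖f‖²` when `a = f x` and `b = f' x`. -/
lemma two_mul_inner_le_norm_sq (c : ℝ) (a b : ℂ) :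
    2 * c * (2 * inner ℝ a b) ≤ ‖b + (c : ℂ) * a‖ ^ 2 := by
  have h1 := norm_add_sq_real b (c • a)
  have h2 := norm_sub_sq_real b (c • a)
  have h3 := sq_nonneg ‖b - c • a‖
  rw [real_inner_smul_right, real_inner_comm] at h1 h2
  rw [← Complex.real_smul]
  linarith

theorem stmt9 (lam : ℝ) (hlam : lam ≠ 0) (f f' : ℝ → ℂ)
    (hderiv : ∀ x ∈ Set.Ici (0 : ℝ), HasDerivWithinAt f (f' x) (Set.Ici 0) x)
    (hcont : ContinuousOn f' (Set.Ici 0))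
    (hfL2 : IntegrableOn (fun x => ‖f x‖ ^ 2) (Set.Ioi 0))
    (hf'L2 : IntegrableOn (fun x => ‖f' x‖ ^ 2) (Set.Ioi 0))
    (hcase : lam < 0 ∨ (0 < lam ∧ f 0 = 0)) :
    ∀ x : ℝ, 0 ≤ x →
      ‖f x‖ ≤ (2 * |lam|) ^ (-(1 : ℝ) / 2) *
        (∫ y in Set.Ioi (0 : ℝ), ‖f' y + (lam : ℂ) * f y‖ ^ 2) ^ ((1 : ℝ) / 2) := by
  intro x hx
  have hfc : ContinuousOn f (Set.Ici 0) := fun y hy => (hderiv y hy).continuousWithinAt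
  have hu : ∀ y ∈ Set.Ioi (0 : ℝ),
      HasDerivAt (fun y => ‖f y‖ ^ 2) (2 * inner ℝ (f y) (f' y)) y := fun y hy =>
    ((hderiv y (Set.Ioi_subset_Ici_self hy)).hasDerivAt (Ici_mem_nhds hy)).norm_sq
  have huc : ContinuousOn (fun y => ‖f y‖ ^ 2) (Set.Ici 0) := hfc.norm.pow 2
  have hu'int : IntegrableOn (fun y => 2 * inner ℝ (f y) (f' y)) (Set.Ioi 0) := by
    refine Integrable.mono' (hfL2.add hf'L2) ?_ (ae_of_all _ fun y => ?_)
    · exact ((continuousOn_const.mul (ContinuousOn.inner (𝕜 := ℝ) hfc hcont)).mono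
        Set.Ioi_subset_Ici_self).aestronglyMeasurable measurableSet_Ioi
    · have h1 := abs_real_inner_le_norm (f y) (f' y)
      have h2 := sq_nonneg (‖f y‖ - ‖f' y‖)
      simp only [Real.norm_eq_abs, abs_mul, abs_two, Pi.add_apply]
      nlinarith
  have hgint : IntegrableOn (fun y => ‖f' y + (lam : ℂ) * f y‖ ^ 2) (Set.Ioi 0) := by
    refine Integrable.mono' ((hf'L2.add (hfL2.const_mul (lam ^ 2))).const_mul 2) ?_
      (ae_of_all _ fun y => ?_)
    · exact (((hcont.add (continuousOn_const.mul hfc)).norm.pow 2).mono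
        Set.Ioi_subset_Ici_self).aestronglyMeasurable measurableSet_Ioi
    · have h1 := norm_add_le (f' y) ((lam : ℂ) * f y)
      rw [norm_mul, Complex.norm_real, Real.norm_eq_abs] at h1
      have h2 := pow_le_pow_left₀ (norm_nonneg _) h1 2
      have h3 := sq_nonneg (‖f' y‖ - |lam| * ‖f y‖)
      have h4 := sq_abs lam
      simp only [Real.norm_eq_abs, abs_pow, abs_norm, Pi.add_apply]
      rw [← h4]
      nlinarith
  have hmono : ∀ s ⊆ Set.Ioi (0 : ℝ),
      2 * lam * ∫ y in s, 2 * inner ℝ (f y) (f' y) ≤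
        ∫ y in Set.Ioi (0 : ℝ), ‖f' y + (lam : ℂ) * f y‖ ^ 2 := by
    intro s hs
    rw [← integral_const_mul]
    exact (integral_mono ((hu'int.mono_set hs).const_mul _) (hgint.mono_set hs)
      fun y => two_mul_inner_le_norm_sq lam (f y) (f' y)).trans
      (setIntegral_mono_set hgint (ae_of_all _ fun y => sq_nonneg _) hs.eventuallyLE)
  have key : 2 * |lam| * ‖f x‖ ^ 2 ≤
      ∫ y in Set.Ioi (0 : ℝ), ‖f' y + (lam : ℂ) * f y‖ ^ 2 := by
    rcases hcase with hneg | ⟨hpos, hf0⟩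
    · have hsub : Set.Ioi x ⊆ Set.Ioi 0 := Set.Ioi_subset_Ioi hx
      have hlim := tendsto_zero_of_hasDerivAt_of_integrableOn_Ioi hu hu'int hfL2
      have hftc := integral_Ioi_of_hasDerivAt_of_tendsto
        ((huc x hx).mono (Set.Ici_subset_Ici.2 hx)) (fun y hy => hu y (hsub hy))
        (hu'int.mono_set hsub) hlim
      have h := hmono _ hsub
      rw [hftc] at h
      rw [abs_of_neg hneg]
      linarith
    · have hsub : Set.Ioc 0 x ⊆ Set.Ioi 0 := Set.Ioc_subset_Ioi_self
      have hftc := intervalIntegral.integral_eq_sub_of_hasDerivAt_of_le hx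
        (huc.mono Set.Icc_subset_Ici_self) (fun y hy => hu y hy.1)
        ((intervalIntegrable_iff_integrableOn_Ioc_of_le hx).2 (hu'int.mono_set hsub))
      have h := hmono _ hsub
      rw [← intervalIntegral.integral_of_le hx, hftc, hf0] at h
      rw [abs_of_pos hpos]
      simpa using h
  have hc : 0 < 2 * |lam| := by positivity
  rw [neg_div, Real.rpow_neg hc.le, ← Real.sqrt_eq_rpow, ← Real.sqrt_eq_rpow, ← Real.sqrt_inv,
    ← Real.sqrt_mul (inv_nonneg.2 hc.le)]
  apply Real.le_sqrt_of_sq_le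
  rwa [le_inv_mul_iff₀ hc]
end
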